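/- arXiv:2305.19279 — 3 statements merged into one kernel-verified Lean document; each statement's English description precedes it below -/
import Mathlib

section
/- Let ‖·‖ be a norm on ℝᵈ with k = diam([0,1]^d) in this norm and c′ = ∫_{B_1(0)} e^{−‖q‖²} dq. Let ρ > 0, R ≥ 1 + 2ρk, β ≥ 1, and let (ε_i)_{i=1}^N be points in ℝᵈ such that every cube p + [0,ρ)^d with p ∈ ρℤᵈ and ‖p‖ < 2R − ρk contains at least N₀ of the points ε_i. Then for every ε ∈ ℝᵈ with ‖ε‖ ≤ R: Σ_{i=1}^N e^{−β‖ε_i−ε‖²} ≥ (c′ N₀ / ρ^d) · e^{−2k²βρ²} · (2β)^{−d/2}. -/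
open MeasureTheory

/-!
Let `r = (2β)^{-1/2}` and let `q` range over the ball of radius `r` about `ε`. The cube of side `ρ`
containing `q` has at least `N₀` of the points `ε_i`, each within `ρk` of `q`, and
`‖ε_i - ε‖² ≤ 2(ρk)² + 2‖q - ε‖²` bounds their weights below by `e^{-2k²βρ²} e^{-2β‖q - ε‖²}`.
Integrating over `q`, every point is counted on a set of volume at most `ρ^d`, while the
substitution `q = ε + ru` turns the Gaussian integral into `(2β)^{-d/2} c′`.
-/

section Multicover

variable {X α : Type*} [Fintype α] {Q : α → Set X} {w : α → ℝ}

theorem natCast_mul_le_sum_indicator {m : ℕ} {a : ℝ} {x : X} (hw : ∀ i, 0 ≤ w i)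
    (hm : m ≤ Set.ncard {i | x ∈ Q i}) (ha : ∀ i, x ∈ Q i → a ≤ w i) :
    m * a ≤ ∑ i, (Q i).indicator (fun _ ↦ w i) x := by
  classical
  rw [Set.ncard_eq_toFinset_card'] at hm
  obtain ⟨T, hTQ, rfl⟩ := Finset.exists_subset_card_eq hm
  have hmemQ : ∀ i ∈ T, x ∈ Q i := fun i hi ↦ by simpa using hTQ hi
  calc (T.card : ℝ) * a = T.card • a := (nsmul_eq_mul _ _).symm
    _ ≤ ∑ i ∈ T, (Q i).indicator (fun _ ↦ w i) x := Finset.card_nsmul_le_sum _ _ _ fun i hi ↦ by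
        rw [Set.indicator_of_mem (hmemQ i hi)]
        exact ha i (hmemQ i hi)
    _ ≤ ∑ i, (Q i).indicator (fun _ ↦ w i) x :=
        Finset.sum_le_univ_sum_of_nonneg fun i ↦ Set.indicator_nonneg (fun _ _ ↦ hw i) x

theorem natCast_mul_setIntegral_le_sum [MeasurableSpace X] {μ : Measure X} {m : ℕ} {g : X → ℝ}
    {B : Set X} (hB : MeasurableSet B) (hg : IntegrableOn g B μ)
    (hQ : ∀ i, MeasurableSet (Q i)) (hQμ : ∀ i, μ (Q i) ≠ ⊤) (hw : ∀ i, 0 ≤ w i)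
    (hm : ∀ x ∈ B, m ≤ Set.ncard {i | x ∈ Q i}) (hgw : ∀ x ∈ B, ∀ i, x ∈ Q i → g x ≤ w i) :
    m * ∫ x in B, g x ∂μ ≤ ∑ i, μ.real (Q i) * w i := by
  have hint : ∀ i, Integrable ((Q i).indicator fun _ ↦ w i) μ := fun i ↦
    (integrable_indicator_iff (hQ i)).2 (integrableOn_const (hQμ i))
  have hsum : Integrable (fun x ↦ ∑ i, (Q i).indicator (fun _ ↦ w i) x) μ :=
    integrable_finsetSum _ fun i _ ↦ hint i
  calc m * ∫ x in B, g x ∂μ = ∫ x in B, m * g x ∂μ := (integral_const_mul _ _).symm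
    _ ≤ ∫ x in B, ∑ i, (Q i).indicator (fun _ ↦ w i) x ∂μ :=
        setIntegral_mono_on (hg.const_mul _) hsum.integrableOn hB fun x hx ↦
          natCast_mul_le_sum_indicator hw (hm x hx) (hgw x hx)
    _ ≤ ∫ x, ∑ i, (Q i).indicator (fun _ ↦ w i) x ∂μ :=
        setIntegral_le_integral hsum <| .of_forall fun x ↦
          Finset.sum_nonneg fun i _ ↦ Set.indicator_nonneg (fun _ _ ↦ hw i) x
    _ = ∑ i, μ.real (Q i) * w i := by
        rw [integral_finsetSum _ fun i _ ↦ hint i]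
        simp only [integral_indicator_const _ (hQ _), smul_eq_mul]

end Multicover

section FiniteDimensional

variable {E : Type*} [NormedAddCommGroup E] [NormedSpace ℝ E] [FiniteDimensional ℝ E]
  (p : Seminorm ℝ E)

theorem continuous_seminorm_of_finiteDimensional : Continuous p :=
  continuousOn_univ.1 (p.convexOn.continuousOn isOpen_univ)

variable {p}

theorem exists_pos_forall_mul_norm_le_seminorm (hp : ∀ x, p x = 0 → x = 0) :
    ∃ c > 0, ∀ x, c * ‖x‖ ≤ p x := by
  cases subsingleton_or_nontrivial E with
  | inl _ => exact ⟨1, one_pos, fun x ↦ by simp [Subsingleton.elim x 0]⟩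
  | inr _ =>
    obtain ⟨x₀, hx₀, hmin⟩ := (isCompact_sphere (0 : E) 1).exists_isMinOn
      (NormedSpace.sphere_nonempty.2 zero_le_one)
      (continuous_seminorm_of_finiteDimensional p).continuousOn
    refine ⟨p x₀, (apply_nonneg p x₀).lt_of_ne' fun h ↦ ?_, fun x ↦ ?_⟩
    · simp [hp x₀ h] at hx₀
    · obtain rfl | hx := eq_or_ne x 0
      · simp
      have hunit : ‖x‖⁻¹ • x ∈ Metric.sphere (0 : E) 1 := by simp [norm_smul, hx]
      have hle : p x₀ ≤ ‖x‖⁻¹ * p x := by simpa [map_smul_eq_mul] using hmin hunit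
      rwa [le_inv_mul_iff₀' (norm_pos_iff.2 hx)] at hle

theorem isBounded_seminorm_ball (hp : ∀ x, p x = 0 → x = 0) (a : E) (r : ℝ) :
    Bornology.IsBounded (p.ball a r) := by
  obtain ⟨c, hc, hcp⟩ := exists_pos_forall_mul_norm_le_seminorm hp
  refine Metric.isBounded_closedBall (x := a) (r := r / c) |>.subset fun x hx ↦ ?_
  rw [mem_closedBall_iff_norm, le_div_iff₀' hc]
  exact (hcp _).trans (p.mem_ball.1 hx).le

variable [MeasurableSpace E] [BorelSpace E] (μ : Measure E)

theorem measurableSet_seminorm_ball (a : E) (r : ℝ) : MeasurableSet (p.ball a r) :=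
  (isOpen_lt ((continuous_seminorm_of_finiteDimensional p).comp (continuous_sub_right a))
    continuous_const).measurableSet

theorem integrableOn_seminorm_ball [IsFiniteMeasureOnCompacts μ] {f : E → ℝ} (hf : Continuous f)
    (hp : ∀ x, p x = 0 → x = 0) (a : E) (r : ℝ) : IntegrableOn f (p.ball a r) μ :=
  (hf.continuousOn.integrableOn_compact (isBounded_seminorm_ball hp a r).isCompact_closure).mono_set
    subset_closure

open scoped Pointwise in
theorem setIntegral_seminorm_ball_comp_sub [μ.IsAddHaarMeasure] {F : Type*} [NormedAddCommGroup F]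
    [NormedSpace ℝ F] (f : ℝ → F) (a : E) {r : ℝ} (hr : 0 < r) :
    ∫ x in p.ball a r, f (p (x - a)) ∂μ =
      r ^ Module.finrank ℝ E • ∫ u in p.ball 0 1, f (r * p u) ∂μ := by
  have hball : r • p.ball 0 1 = p.ball 0 r := by
    rw [Seminorm.smul_ball_zero hr.ne', Real.norm_of_nonneg hr.le, mul_one]
  have hcentre : ∫ x in p.ball a r, f (p (x - a)) ∂μ = ∫ x in p.ball 0 r, f (p x) ∂μ := by
    have hpre : p.ball a r = (· - a) ⁻¹' p.ball 0 r := by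
      ext x
      simp only [Set.mem_preimage, p.mem_ball, sub_zero]
    rw [hpre, (measurePreserving_sub_right μ a).setIntegral_preimage_emb
      (measurableEmbedding_subRight a) fun x ↦ f (p x)]
  have hscale : ∀ u, f (r * p u) = f (p (r • u)) := fun u ↦ by
    rw [map_smul_eq_mul, Real.norm_of_nonneg hr.le]
  simp only [hscale]
  rw [Measure.setIntegral_comp_smul_of_pos μ (fun x ↦ f (p x)) _ hr, hball, hcentre,
    smul_inv_smul₀ (pow_pos hr _).ne']

theorem setIntegral_seminorm_ball_exp_neg_mul_sq [μ.IsAddHaarMeasure] {γ : ℝ} (hγ : 0 < γ) (a : E) :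
    ∫ x in p.ball a (√γ)⁻¹, Real.exp (-(γ * p (x - a) ^ 2)) ∂μ =
      γ ^ (-(Module.finrank ℝ E : ℝ) / 2) * ∫ u in p.ball 0 1, Real.exp (-p u ^ 2) ∂μ := by
  have hpow : (√γ)⁻¹ ^ Module.finrank ℝ E = γ ^ (-(Module.finrank ℝ E : ℝ) / 2) := by
    rw [Real.sqrt_eq_rpow, ← Real.rpow_neg hγ.le, ← Real.rpow_mul_natCast hγ.le]
    congr 1
    ring
  have hsq : ∀ t : ℝ, γ * ((√γ)⁻¹ * t) ^ 2 = t ^ 2 := fun t ↦ by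
    rw [mul_pow, inv_pow, Real.sq_sqrt hγ.le, mul_inv_cancel_left₀ hγ.ne']
  rw [setIntegral_seminorm_ball_comp_sub μ (fun t ↦ Real.exp (-(γ * t ^ 2))) a
    (inv_pos.2 (Real.sqrt_pos.2 hγ)), hpow, smul_eq_mul]
  simp only [hsq]

end FiniteDimensional

section Cubes

variable {ι : Type*}

/-- The index `n ∈ ℤ^ι` of the half-open cube `ρn + [0,ρ)^ι` that contains `x`, for `0 < ρ`. -/
noncomputable def cubeIndex (ρ : ℝ) (x : ι → ℝ) : ι → ℤ :=
  fun j ↦ ⌊x j / ρ⌋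

variable {ρ : ℝ}

theorem cubeIndex_eq_iff (hρ : 0 < ρ) {x : ι → ℝ} {n : ι → ℤ} :
    cubeIndex ρ x = n ↔ ∀ j, x j ∈ Set.Ico (ρ * n j) (ρ * n j + ρ) := by
  simp only [funext_iff, cubeIndex, Int.floor_eq_iff, le_div_iff₀' hρ, div_lt_iff₀' hρ, mul_add,
    mul_one, Set.mem_Ico]

theorem cubeIndex_mul_intCast (hρ : 0 < ρ) (n : ι → ℤ) :
    cubeIndex ρ (fun j ↦ ρ * n j) = n :=
  (cubeIndex_eq_iff hρ).2 fun j ↦ ⟨le_rfl, by linarith⟩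

theorem cubeIndex_preimage_singleton (hρ : 0 < ρ) (n : ι → ℤ) :
    cubeIndex ρ ⁻¹' {n} = Set.univ.pi fun j ↦ Set.Ico (ρ * n j) (ρ * n j + ρ) := by
  ext x
  simp only [Set.mem_preimage, Set.mem_singleton_iff, cubeIndex_eq_iff hρ, Set.mem_univ_pi]

theorem measurableSet_cubeIndex_preimage_singleton [Countable ι] (hρ : 0 < ρ) (n : ι → ℤ) :
    MeasurableSet (cubeIndex ρ ⁻¹' {n}) := by
  rw [cubeIndex_preimage_singleton hρ]
  exact .univ_pi fun _ ↦ measurableSet_Ico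

variable [Fintype ι]

theorem volume_cubeIndex_preimage_singleton (hρ : 0 < ρ) (n : ι → ℤ) :
    volume (cubeIndex ρ ⁻¹' {n}) = ENNReal.ofReal (ρ ^ Fintype.card ι) := by
  rw [cubeIndex_preimage_singleton hρ, Real.volume_pi_Ico, ENNReal.ofReal_pow hρ.le]
  simp

theorem norm_sub_le_of_cubeIndex_eq (hρ : 0 < ρ) {x y : ι → ℝ}
    (hxy : cubeIndex ρ x = cubeIndex ρ y) : ‖x - y‖ ≤ ρ := by
  rw [pi_norm_le_iff_of_nonneg hρ.le]
  intro j
  obtain ⟨hx, hx'⟩ := (cubeIndex_eq_iff hρ).1 hxy j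
  obtain ⟨hy, hy'⟩ := (cubeIndex_eq_iff hρ).1 (rfl : cubeIndex ρ y = _) j
  rw [Pi.sub_apply, Real.norm_eq_abs, abs_le]
  constructor <;> linarith

end Cubes

section Diameter

variable {ι : Type*} (p : Seminorm ℝ (ι → ℝ))

/-- The diameter `k` of the unit cube `[0,1]^ι` with respect to `p`, as a real supremum; it bounds
the `p`-distance of two points in a common cube of side `ρ` by `ρk`. -/
noncomputable def unitCubeDiam : ℝ :=
  sSup {r | ∃ x ∈ Set.Icc (0 : ι → ℝ) 1, ∃ y ∈ Set.Icc (0 : ι → ℝ) 1, r = p (x - y)}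

theorem seminorm_sub_le_unitCubeDiam [Finite ι] {x y : ι → ℝ} (hx : x ∈ Set.Icc 0 1)
    (hy : y ∈ Set.Icc 0 1) : p (x - y) ≤ unitCubeDiam p := by
  have := Fintype.ofFinite ι
  refine le_csSup ?_ ⟨x, hx, y, hy, rfl⟩
  have hcont : Continuous fun z : (ι → ℝ) × (ι → ℝ) ↦ p (z.1 - z.2) :=
    (continuous_seminorm_of_finiteDimensional p).comp continuous_sub
  have hcube : IsCompact (Set.Icc (0 : ι → ℝ) 1) := isCompact_Icc
  refine ((hcube.prod hcube).bddAbove_image hcont.continuousOn).mono ?_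
  rintro _ ⟨x, hx, y, hy, rfl⟩
  exact ⟨(x, y), ⟨hx, hy⟩, rfl⟩

variable [Fintype ι]

theorem seminorm_le_unitCubeDiam_of_norm_le_one {z : ι → ℝ} (hz : ‖z‖ ≤ 1) :
    p z ≤ unitCubeDiam p := by
  have hz_abs : ∀ j, |z j| ≤ 1 := fun j ↦ (norm_le_pi_norm z j).trans hz
  have hpos : z⁺ ∈ Set.Icc 0 1 :=
    ⟨posPart_nonneg z, fun j ↦ max_le ((le_abs_self _).trans (hz_abs j)) zero_le_one⟩
  have hneg : z⁻ ∈ Set.Icc 0 1 :=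
    ⟨negPart_nonneg z, fun j ↦ max_le ((neg_le_abs _).trans (hz_abs j)) zero_le_one⟩
  simpa only [posPart_sub_negPart] using seminorm_sub_le_unitCubeDiam p hpos hneg

theorem seminorm_le_mul_unitCubeDiam {ρ : ℝ} (hρ : 0 < ρ) {z : ι → ℝ} (hz : ‖z‖ ≤ ρ) :
    p z ≤ ρ * unitCubeDiam p := by
  have hunit : ‖ρ⁻¹ • z‖ ≤ 1 := by
    rwa [norm_smul, norm_inv, Real.norm_of_nonneg hρ.le, inv_mul_le_one₀ hρ]
  have hle := seminorm_le_unitCubeDiam_of_norm_le_one p hunit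
  rwa [map_smul_eq_mul, norm_inv, Real.norm_of_nonneg hρ.le, inv_mul_le_iff₀ hρ] at hle

end Diameter

section PartitionFunction

theorem exp_neg_mul_exp_neg_le_of_le_add {β s a b : ℝ} (hβ : 0 ≤ β) (hs : 0 ≤ s) (h : s ≤ a + b) :
    Real.exp (-(2 * β * a ^ 2)) * Real.exp (-(2 * β * b ^ 2)) ≤ Real.exp (-β * s ^ 2) := by
  rw [← Real.exp_add, Real.exp_le_exp]
  have hsq : s ^ 2 ≤ 2 * (a ^ 2 + b ^ 2) := (pow_le_pow_left₀ hs h 2).trans add_sq_le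
  linarith [mul_le_mul_of_nonneg_left hsq hβ]

variable {ι α : Type*} [Fintype ι] [Fintype α] {p : Seminorm ℝ (ι → ℝ)} {ρ β : ℝ}

theorem natCast_mul_setIntegral_exp_le_sum_exp (hp : ∀ x, p x = 0 → x = 0) (hρ : 0 < ρ)
    (hβ : 0 ≤ β) {r : ℝ} {m : ℕ} {y : α → ι → ℝ} {ε : ι → ℝ}
    (hm : ∀ x ∈ p.ball ε r, m ≤ Set.ncard {i | cubeIndex ρ (y i) = cubeIndex ρ x}) :
    m * ∫ x in p.ball ε r, Real.exp (-(2 * β * (ρ * unitCubeDiam p) ^ 2)) *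
        Real.exp (-(2 * β * p (x - ε) ^ 2)) ≤
      ρ ^ Fintype.card ι * ∑ i, Real.exp (-β * p (y i - ε) ^ 2) := by
  have hcont : Continuous fun x ↦ Real.exp (-(2 * β * (ρ * unitCubeDiam p) ^ 2)) *
      Real.exp (-(2 * β * p (x - ε) ^ 2)) := by
    have hpcont := continuous_seminorm_of_finiteDimensional p
    fun_prop
  have hweight : ∀ x i, cubeIndex ρ x = cubeIndex ρ (y i) →
      Real.exp (-(2 * β * (ρ * unitCubeDiam p) ^ 2)) * Real.exp (-(2 * β * p (x - ε) ^ 2)) ≤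
        Real.exp (-β * p (y i - ε) ^ 2) := fun x i hxi ↦ by
    refine exp_neg_mul_exp_neg_le_of_le_add hβ (apply_nonneg p _) ?_
    calc p (y i - ε) = p (y i - x + (x - ε)) := by rw [sub_add_sub_cancel]
      _ ≤ p (y i - x) + p (x - ε) := map_add_le_add p _ _
      _ ≤ ρ * unitCubeDiam p + p (x - ε) := by
        gcongr
        exact seminorm_le_mul_unitCubeDiam p hρ (norm_sub_le_of_cubeIndex_eq hρ hxi.symm)
  have hvol := fun i ↦ volume_cubeIndex_preimage_singleton hρ (cubeIndex ρ (y i))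
  refine (natCast_mul_setIntegral_le_sum (Q := fun i ↦ cubeIndex ρ ⁻¹' {cubeIndex ρ (y i)})
    (measurableSet_seminorm_ball ε r) (integrableOn_seminorm_ball volume hcont hp ε r)
    (fun i ↦ measurableSet_cubeIndex_preimage_singleton hρ _)
    (fun i ↦ hvol i ▸ ENNReal.ofReal_ne_top) (fun i ↦ (Real.exp_pos _).le)
    (fun x hx ↦ by simpa only [Set.mem_preimage, Set.mem_singleton_iff, eq_comm] using hm x hx)
    fun x _ i ↦ hweight x i).trans_eq ?_
  simp only [Measure.real, hvol, ENNReal.toReal_ofReal (pow_nonneg hρ.le _), Finset.mul_sum]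

theorem partition_function_lower_bound_general (hp : ∀ x, p x = 0 → x = 0) (hρ : 0 < ρ)
    (hβ : 0 < β) {m : ℕ} {y : α → ι → ℝ} {ε : ι → ℝ}
    (hm : ∀ n : ι → ℤ, p ((fun j ↦ ρ * n j) - ε) < (√(2 * β))⁻¹ + ρ * unitCubeDiam p →
      m ≤ Set.ncard {i | ∀ j, y i j ∈ Set.Ico (ρ * n j) (ρ * n j + ρ)}) :
    ((∫ q in {q | p q < 1}, Real.exp (-p q ^ 2)) * m / ρ ^ Fintype.card ι) *
        Real.exp (-(2 * unitCubeDiam p ^ 2 * β * ρ ^ 2)) *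
        (2 * β) ^ (-(Fintype.card ι : ℝ) / 2) ≤
      ∑ i, Real.exp (-β * p (y i - ε) ^ 2) := by
  have hball : ∀ x ∈ p.ball ε (√(2 * β))⁻¹,
      m ≤ Set.ncard {i | cubeIndex ρ (y i) = cubeIndex ρ x} := fun x hx ↦ by
    simp only [cubeIndex_eq_iff hρ]
    refine hm _ ?_
    set v : ι → ℝ := fun j ↦ ρ * cubeIndex ρ x j
    have hvx : p (v - x) ≤ ρ * unitCubeDiam p := seminorm_le_mul_unitCubeDiam p hρ <|
      norm_sub_le_of_cubeIndex_eq hρ (cubeIndex_mul_intCast hρ _)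
    calc p (v - ε) = p (v - x + (x - ε)) := by rw [sub_add_sub_cancel]
      _ ≤ p (v - x) + p (x - ε) := map_add_le_add p _ _
      _ < (√(2 * β))⁻¹ + ρ * unitCubeDiam p := by linarith [p.mem_ball.1 hx]
  have hint := natCast_mul_setIntegral_exp_le_sum_exp hp hρ hβ.le hball
  rw [integral_const_mul, setIntegral_seminorm_ball_exp_neg_mul_sq _ (by positivity),
    Module.finrank_fintype_fun_eq_card, p.ball_zero_eq] at hint
  refine le_of_mul_le_mul_left (Eq.trans_le ?_ hint) (pow_pos hρ (Fintype.card ι))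
  field_simp

end PartitionFunction

/-- **Lower bound on the partition function.** If every cube `p + [0,ρ)^d` with `p ∈ ρℤᵈ`,
`‖p‖ < 2R − ρk`, contains at least `N₀` of the points `ε_i`, then for every `ε` with
`‖ε‖ ≤ R`, `Σ_i e^{−β‖ε_i−ε‖²} ≥ (c′N₀/ρ^d) e^{−2k²βρ²} (2β)^{−d/2}`, where
`k = diam([0,1]^d)` and `c′ = ∫_{B_1(0)} e^{−‖q‖²} dq`, for an arbitrary norm `nrm` on `ℝᵈ`,
provided `R ≥ 1 + 2ρk` and `β ≥ 1`. -/
theorem partition_function_lower_bound (d : ℕ)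
    (nrm : (Fin d → ℝ) → ℝ)
    (htri : ∀ x y : Fin d → ℝ, nrm (x + y) ≤ nrm x + nrm y)
    (hhom : ∀ (s : ℝ) (x : Fin d → ℝ), nrm (s • x) = |s| * nrm x)
    (hdef : ∀ x : Fin d → ℝ, nrm x = 0 → x = 0)
    (k : ℝ)
    (hk : k = sSup {r : ℝ | ∃ x ∈ Set.Icc (0 : Fin d → ℝ) 1,
        ∃ y ∈ Set.Icc (0 : Fin d → ℝ) 1, r = nrm (x - y)})
    (c' : ℝ) (hc' : c' = ∫ q in {q : Fin d → ℝ | nrm q < 1}, Real.exp (-nrm q ^ 2))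
    (ρ : ℝ) (hρ : 0 < ρ)
    (R : ℝ) (hR : 1 + 2 * ρ * k ≤ R)
    (β : ℝ) (hβ : 1 ≤ β)
    (N : ℕ) (εs : Fin N → Fin d → ℝ)
    (N₀ : ℕ)
    (hcount : ∀ p : Fin d → ℤ, nrm (fun j => ρ * p j) < 2 * R - ρ * k →
      N₀ ≤ Set.ncard {i : Fin N | ∀ j, εs i j ∈ Set.Ico (ρ * p j) (ρ * p j + ρ)})
    (ε : Fin d → ℝ) (hε : nrm ε ≤ R) :
    (c' * (N₀ : ℝ) / ρ ^ d) * Real.exp (-(2 * k ^ 2 * β * ρ ^ 2)) *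
        (2 * β) ^ (-(d : ℝ) / 2) ≤
      ∑ i : Fin N, Real.exp (-β * nrm (εs i - ε) ^ 2) := by
  have hr : (√(2 * β))⁻¹ ≤ 1 := inv_le_one_of_one_le₀ (Real.one_le_sqrt.2 (by linarith))
  have htri_sub (x : Fin d → ℝ) : nrm x ≤ nrm (x - ε) + nrm ε := by simpa using htri (x - ε) ε
  let p : Seminorm ℝ (Fin d → ℝ) := .of nrm htri hhom
  obtain rfl : k = unitCubeDiam p := hk
  have hbound := partition_function_lower_bound_general (p := p) hdef hρ (one_pos.trans_le hβ)
    fun n (hn : nrm (_ - ε) < _) ↦ hcount n ((htri_sub _).trans_lt (by linarith))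
  rw [Fintype.card_fin] at hbound
  exact hc' ▸ hbound
end

section
/- Let A ∈ ℝ^{m×m} and D ∈ ℝ^{n×n} be symmetric matrices with Au·u ≥ λ_A‖u‖² (λ_A > 0) and Dv·v ≥ λ_D‖v‖² (λ_D > 0), let B ∈ ℝ^{n×m}, C ∈ ℝ^{m×n}, and suppose there is 0 ≤ μ < 1 with |(B + Cᵀ)u·v| ≤ μ (Au·u + Dv·v) for all u, v. Then for any f ∈ ℝ^m and g ∈ ℝⁿ there is a unique pair (u*, v*) ∈ ℝ^m × ℝⁿ satisfying A u* + C v* = f and B u* + D v* = g; equivalently, (u*, v*) is the unique Nash equilibrium of the game with costs F(u,v) = ½Au·u + Cv·u − f·u and G(u,v) = ½Dv·v + Bu·v − g·v, i.e. the unique pair with F(u*,v*) ≤ F(u,v*) for all u and G(u*,v*) ≤ G(u*,v) for all v. -/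
open Matrix

/-!
Player one's cost at `u + h` differs from that at `u` by `(Au + Cv - f)·h + ½Ah·h`, and likewise
for player two. When `A` and `D` are positive semidefinite, a pair is therefore a Nash equilibrium
exactly when both gradients vanish, which is the linear system with block matrix `[A C; B D]`. The
quadratic form of this matrix is `Au·u + Dv·v + (B + Cᵀ)u·v`; it is positive definite because the
cross term is dominated by `μ < 1` times the diagonal terms, so the matrix is injective and,
being square, bijective.
-/

section NashEquilibrium

variable {X Y R : Type*} [LE R]

/-- Nash equilibria of the two-player game in which the first player chooses `u` to minimize
`F u v` and the second player chooses `v` to minimize `G u v`. -/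
def IsNashEquilibrium (F G : X → Y → R) (p : X × Y) : Prop :=
  (∀ u, F p.1 p.2 ≤ F u p.2) ∧ ∀ v, G p.1 p.2 ≤ G p.1 v

end NashEquilibrium

section Semiring

variable {R ι κ : Type*} [NonUnitalNonAssocSemiring R] [Fintype ι] [Fintype κ]

theorem fromBlocks_mulVec_sumElim_eq_iff {A : Matrix ι ι R} {C : Matrix ι κ R}
    {B : Matrix κ ι R} {D : Matrix κ κ R} {u f : ι → R} {v g : κ → R} :
    fromBlocks A C B D *ᵥ Sum.elim u v = Sum.elim f g ↔
      A *ᵥ u + C *ᵥ v = f ∧ B *ᵥ u + D *ᵥ v = g := by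
  rw [fromBlocks_mulVec, Sum.elim_eq_iff]
  rfl

theorem mulVec_dotProduct_nonneg_of_pos [Preorder R] {M : Matrix ι ι R}
    (hM : ∀ x ≠ 0, 0 < M *ᵥ x ⬝ᵥ x) (x : ι → R) : 0 ≤ M *ᵥ x ⬝ᵥ x := by
  obtain rfl | hx := eq_or_ne x 0
  · simp
  · exact (hM x hx).le

end Semiring

section CommSemiring

variable {R ι κ : Type*} [CommSemiring R] [Fintype ι] [Fintype κ]

theorem mulVec_dotProduct_comm {M : Matrix ι ι R} (hM : M.IsSymm) (x y : ι → R) :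
    M *ᵥ x ⬝ᵥ y = M *ᵥ y ⬝ᵥ x := by
  rw [dotProduct_comm, dotProduct_mulVec, ← mulVec_transpose, hM.eq]

theorem fromBlocks_mulVec_dotProduct_sumElim (A : Matrix ι ι R) (C : Matrix ι κ R)
    (B : Matrix κ ι R) (D : Matrix κ κ R) (u : ι → R) (v : κ → R) :
    fromBlocks A C B D *ᵥ Sum.elim u v ⬝ᵥ Sum.elim u v =
      A *ᵥ u ⬝ᵥ u + D *ᵥ v ⬝ᵥ v + (B + Cᵀ) *ᵥ u ⬝ᵥ v := by
  have cross_term : Cᵀ *ᵥ u ⬝ᵥ v = C *ᵥ v ⬝ᵥ u := by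
    rw [mulVec_transpose, ← dotProduct_mulVec, dotProduct_comm]
  rw [fromBlocks_mulVec, sumElim_dotProduct_sumElim, Sum.elim_comp_inl, Sum.elim_comp_inr]
  simp only [add_mulVec, add_dotProduct, cross_term]
  ring

end CommSemiring

section OrderedCommRing

variable {R ι κ : Type*} [CommRing R] [LinearOrder R] [IsStrictOrderedRing R]
  [Fintype ι] [Fintype κ]

theorem mulVec_dotProduct_pos_of_coercive {M : Matrix ι ι R} {lam : R} (hlam : 0 < lam)
    (hM : ∀ x, lam * (x ⬝ᵥ x) ≤ M *ᵥ x ⬝ᵥ x) {x : ι → R} (hx : x ≠ 0) :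
    0 < M *ᵥ x ⬝ᵥ x := by
  have self_nonneg : 0 ≤ x ⬝ᵥ x := Finset.sum_nonneg fun i _ ↦ mul_self_nonneg (x i)
  have self_pos : 0 < x ⬝ᵥ x := self_nonneg.lt_of_ne' (dotProduct_self_eq_zero.not.2 hx)
  exact (mul_pos hlam self_pos).trans_le (hM x)

theorem fromBlocks_mulVec_dotProduct_pos_of_cross_bound {A : Matrix ι ι R} {C : Matrix ι κ R}
    {B : Matrix κ ι R} {D : Matrix κ κ R} (hA : ∀ u ≠ 0, 0 < A *ᵥ u ⬝ᵥ u)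
    (hD : ∀ v ≠ 0, 0 < D *ᵥ v ⬝ᵥ v) {μ : R} (hμ : μ < 1)
    (hcross : ∀ u v, -(μ * (A *ᵥ u ⬝ᵥ u + D *ᵥ v ⬝ᵥ v)) ≤ (B + Cᵀ) *ᵥ u ⬝ᵥ v)
    {x : ι ⊕ κ → R} (hx : x ≠ 0) : 0 < fromBlocks A C B D *ᵥ x ⬝ᵥ x := by
  obtain ⟨u, v, rfl⟩ : ∃ u v, x = Sum.elim u v := ⟨_, _, (Sum.elim_comp_inl_inr x).symm⟩
  have diagonal_pos : 0 < A *ᵥ u ⬝ᵥ u + D *ᵥ v ⬝ᵥ v := by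
    obtain rfl | hu := eq_or_ne u 0
    · have hv : v ≠ 0 := fun hv ↦ hx (by rw [hv, Sum.elim_zero_zero])
      simpa using hD v hv
    · exact add_pos_of_pos_of_nonneg (hA u hu) (mulVec_dotProduct_nonneg_of_pos hD v)
  calc
    0 < (1 - μ) * (A *ᵥ u ⬝ᵥ u + D *ᵥ v ⬝ᵥ v) := mul_pos (sub_pos.2 hμ) diagonal_pos
    _ ≤ A *ᵥ u ⬝ᵥ u + D *ᵥ v ⬝ᵥ v + (B + Cᵀ) *ᵥ u ⬝ᵥ v := by linarith [hcross u v]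
    _ = fromBlocks A C B D *ᵥ Sum.elim u v ⬝ᵥ Sum.elim u v :=
      (fromBlocks_mulVec_dotProduct_sumElim A C B D u v).symm

end OrderedCommRing

section LinearSystem

variable {K ι κ : Type*} [Field K] [Preorder K] [Fintype ι] [Fintype κ]

theorem mulVec_bijective_of_pos {M : Matrix ι ι K} (hM : ∀ x ≠ 0, 0 < M *ᵥ x ⬝ᵥ x) :
    Function.Bijective (M *ᵥ ·) := by
  have injective : Function.Injective M.mulVecLin := by
    rw [injective_iff_map_eq_zero]
    intro x hx
    by_contra hx_ne
    have hpos := hM x hx_ne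
    rw [← mulVecLin_apply, hx, zero_dotProduct] at hpos
    exact hpos.false
  exact ⟨injective, LinearMap.injective_iff_surjective.1 injective⟩

theorem existsUnique_block_system {A : Matrix ι ι K} {C : Matrix ι κ K} {B : Matrix κ ι K}
    {D : Matrix κ κ K} (hpos : ∀ x ≠ 0, 0 < fromBlocks A C B D *ᵥ x ⬝ᵥ x)
    (f : ι → K) (g : κ → K) :
    ∃! p : (ι → K) × (κ → K), A *ᵥ p.1 + C *ᵥ p.2 = f ∧ B *ᵥ p.1 + D *ᵥ p.2 = g := by
  have block_eq_iff (p : (ι → K) × (κ → K)) :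
      fromBlocks A C B D *ᵥ (Equiv.sumArrowEquivProdArrow ι κ K).symm p = Sum.elim f g ↔
        A *ᵥ p.1 + C *ᵥ p.2 = f ∧ B *ᵥ p.1 + D *ᵥ p.2 = g :=
    fromBlocks_mulVec_sumElim_eq_iff
  exact ((Equiv.sumArrowEquivProdArrow ι κ K).existsUnique_congr' block_eq_iff).1
    ((mulVec_bijective_of_pos hpos).existsUnique (Sum.elim f g))

end LinearSystem

section QuadraticCost

variable {K ι : Type*} [Field K] [Fintype ι]

/-- The cost `½Mx·x + c·x - f·x` that a player of a quadratic game assigns to the strategy `x`.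
The vector `c` is the contribution of the opponent's strategy; it is kept apart from `f`, so that
the first-order condition reads `Mx + c = f`. -/
def quadraticCost (M : Matrix ι ι K) (c f x : ι → K) : K :=
  (1 / 2) * (M *ᵥ x ⬝ᵥ x) + c ⬝ᵥ x - f ⬝ᵥ x

theorem quadraticCost_add [NeZero (2 : K)] {M : Matrix ι ι K} (hM : M.IsSymm)
    (c f x h : ι → K) :
    quadraticCost M c f (x + h) =
      quadraticCost M c f x + (M *ᵥ x + c - f) ⬝ᵥ h + (1 / 2) * (M *ᵥ h ⬝ᵥ h) := by
  simp only [quadraticCost, mulVec_add, add_dotProduct, sub_dotProduct, dotProduct_add,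
    mulVec_dotProduct_comm hM h x]
  field

end QuadraticCost

section OrderedField

variable {K ι κ : Type*} [Field K] [LinearOrder K] [IsStrictOrderedRing K] [Fintype ι] [Fintype κ]

theorem eq_zero_of_forall_quadratic_nonneg {a b : K} (h : ∀ t : K, 0 ≤ a * (t * t) + b * t) :
    b = 0 := by
  have discrim_nonpos : discrim a b 0 ≤ 0 := discrim_le_zero fun t ↦ by simpa using h t
  have sq_nonpos : b ^ 2 ≤ 0 := by simpa [discrim] using discrim_nonpos
  simpa using sq_nonpos.antisymm (sq_nonneg b)

theorem forall_quadraticCost_le_iff {M : Matrix ι ι K} (hM : M.IsSymm)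
    (hM_nonneg : ∀ x, 0 ≤ M *ᵥ x ⬝ᵥ x) {c f x : ι → K} :
    (∀ y, quadraticCost M c f x ≤ quadraticCost M c f y) ↔ M *ᵥ x + c = f := by
  constructor
  · intro hmin
    set w := M *ᵥ x + c - f with hw
    have increment_nonneg (t : K) : 0 ≤ (1 / 2) * (M *ᵥ w ⬝ᵥ w) * (t * t) + w ⬝ᵥ w * t := by
      have hle := hmin (x + t • w)
      rw [quadraticCost_add hM, ← hw, mulVec_smul] at hle
      simp only [smul_dotProduct, dotProduct_smul, smul_eq_mul] at hle
      linarith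
    have gradient_eq_zero : w = 0 :=
      dotProduct_self_eq_zero.1 (eq_zero_of_forall_quadratic_nonneg increment_nonneg)
    exact sub_eq_zero.1 gradient_eq_zero
  · intro hx y
    have expansion := quadraticCost_add hM c f x (y - x)
    rw [add_sub_cancel, hx, sub_self, zero_dotProduct, add_zero] at expansion
    linarith [hM_nonneg (y - x)]

theorem isNashEquilibrium_quadraticCost_iff {A : Matrix ι ι K} {D : Matrix κ κ K}
    (hA : A.IsSymm) (hD : D.IsSymm) (hA_nonneg : ∀ u, 0 ≤ A *ᵥ u ⬝ᵥ u)
    (hD_nonneg : ∀ v, 0 ≤ D *ᵥ v ⬝ᵥ v) {B : Matrix κ ι K} {C : Matrix ι κ K}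
    {f : ι → K} {g : κ → K} {p : (ι → K) × (κ → K)} :
    IsNashEquilibrium (fun u v ↦ quadraticCost A (C *ᵥ v) f u)
        (fun u v ↦ quadraticCost D (B *ᵥ u) g v) p ↔
      A *ᵥ p.1 + C *ᵥ p.2 = f ∧ B *ᵥ p.1 + D *ᵥ p.2 = g := by
  rw [IsNashEquilibrium, forall_quadraticCost_le_iff hA hA_nonneg,
    forall_quadraticCost_le_iff hD hD_nonneg, add_comm (D *ᵥ p.2)]

theorem quadratic_game_nash_equilibrium_general {A : Matrix ι ι K} {D : Matrix κ κ K}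
    (hA : A.IsSymm) (hD : D.IsSymm) {B : Matrix κ ι K} {C : Matrix ι κ K}
    (hpos : ∀ x ≠ 0, 0 < fromBlocks A C B D *ᵥ x ⬝ᵥ x) (f : ι → K) (g : κ → K) :
    (∃! p : (ι → K) × (κ → K), A *ᵥ p.1 + C *ᵥ p.2 = f ∧ B *ᵥ p.1 + D *ᵥ p.2 = g) ∧
    ∀ p : (ι → K) × (κ → K),
      (A *ᵥ p.1 + C *ᵥ p.2 = f ∧ B *ᵥ p.1 + D *ᵥ p.2 = g) ↔
        IsNashEquilibrium (fun u v ↦ quadraticCost A (C *ᵥ v) f u)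
          (fun u v ↦ quadraticCost D (B *ᵥ u) g v) p := by
  have block_nonneg (u : ι → K) (v : κ → K) :=
    mulVec_dotProduct_nonneg_of_pos hpos (Sum.elim u v)
  simp only [fromBlocks_mulVec_dotProduct_sumElim] at block_nonneg
  have hA_nonneg (u : ι → K) : 0 ≤ A *ᵥ u ⬝ᵥ u := by simpa using block_nonneg u 0
  have hD_nonneg (v : κ → K) : 0 ≤ D *ᵥ v ⬝ᵥ v := by simpa using block_nonneg 0 v
  exact ⟨existsUnique_block_system hpos f g,
    fun _ ↦ (isNashEquilibrium_quadraticCost_iff hA hD hA_nonneg hD_nonneg).symm⟩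

end OrderedField

/-- **Existence and uniqueness of the Nash equilibrium of the quadratic game.**
Under the coercivity assumptions on `A`, `D` and the smallness assumption on `B + Cᵀ`,
the linear system `Au + Cv = f`, `Bu + Dv = g` has a unique solution `(u*,v*)`, and a
pair solves this system if and only if it is a Nash equilibrium of the game with costs
`F(u,v) = ½Au·u + Cv·u − f·u` and `G(u,v) = ½Dv·v + Bu·v − g·v`. -/
theorem quadratic_game_nash_equilibrium (m n : ℕ)
    (A : Matrix (Fin m) (Fin m) ℝ) (D : Matrix (Fin n) (Fin n) ℝ)
    (hA : A.IsSymm) (hD : D.IsSymm)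
    (B : Matrix (Fin n) (Fin m) ℝ) (C : Matrix (Fin m) (Fin n) ℝ)
    (lamA lamD : ℝ) (hlamA : 0 < lamA) (hlamD : 0 < lamD)
    (hAc : ∀ u : Fin m → ℝ, lamA * (u ⬝ᵥ u) ≤ A.mulVec u ⬝ᵥ u)
    (hDc : ∀ v : Fin n → ℝ, lamD * (v ⬝ᵥ v) ≤ D.mulVec v ⬝ᵥ v)
    (μ : ℝ) (hμ0 : 0 ≤ μ) (hμ1 : μ < 1)
    (hcross : ∀ (u : Fin m → ℝ) (v : Fin n → ℝ),
      |(B + Cᵀ).mulVec u ⬝ᵥ v| ≤ μ * (A.mulVec u ⬝ᵥ u + D.mulVec v ⬝ᵥ v))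
    (f : Fin m → ℝ) (g : Fin n → ℝ) :
    (∃! p : (Fin m → ℝ) × (Fin n → ℝ),
        A.mulVec p.1 + C.mulVec p.2 = f ∧ B.mulVec p.1 + D.mulVec p.2 = g) ∧
    (∀ p : (Fin m → ℝ) × (Fin n → ℝ),
        (A.mulVec p.1 + C.mulVec p.2 = f ∧ B.mulVec p.1 + D.mulVec p.2 = g) ↔
        ((∀ u : Fin m → ℝ,
            (1 / 2) * (A.mulVec p.1 ⬝ᵥ p.1) + C.mulVec p.2 ⬝ᵥ p.1 - f ⬝ᵥ p.1 ≤
              (1 / 2) * (A.mulVec u ⬝ᵥ u) + C.mulVec p.2 ⬝ᵥ u - f ⬝ᵥ u) ∧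
         (∀ v : Fin n → ℝ,
            (1 / 2) * (D.mulVec p.2 ⬝ᵥ p.2) + B.mulVec p.1 ⬝ᵥ p.2 - g ⬝ᵥ p.2 ≤
              (1 / 2) * (D.mulVec v ⬝ᵥ v) + B.mulVec p.1 ⬝ᵥ v - g ⬝ᵥ v))) := by
  have block_pos : ∀ x ≠ 0, 0 < fromBlocks A C B D *ᵥ x ⬝ᵥ x := fun _ ↦
    fromBlocks_mulVec_dotProduct_pos_of_cross_bound
      (fun _ ↦ mulVec_dotProduct_pos_of_coercive hlamA hAc)
      (fun _ ↦ mulVec_dotProduct_pos_of_coercive hlamD hDc) hμ1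
      fun u v ↦ neg_le_of_abs_le (hcross u v)
  exact quadratic_game_nash_equilibrium_general hA hD block_pos f g
end

section
/- Let (ε_i, σ_i) ∈ ℝᵈ × ℝᵈ for i = 1,…,N, let ℂ ∈ ℝ^{d×d} be symmetric positive definite, β > 0, and define the Gibbs weights p*_i(ε) = e^{−β ℂ(ε_i−ε)·(ε_i−ε)} / Σ_{j=1}^N e^{−β ℂ(ε_j−ε)·(ε_j−ε)} and the effective material law σ̂(ε) = Σ_{i=1}^N p*_i(ε) σ_i. Then σ̂ is differentiable on ℝᵈ and its derivative is given by Dσ̂(ε)[h] = 2β Σ_{j=1}^N p*_j(ε) (ℂ(ε_j − ε̄(ε))·h) σ_j for all h ∈ ℝᵈ, where ε̄(ε) = Σ_{i=1}^N p*_i(ε) ε_i; equivalently, Dσ̂(ε) = Σ_j 2β p*_j(ε) σ_j ⊗ (ℂ(ε_j − ε̄(ε))). -/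
open Matrix

/-!
Write `p i = exp (u i - log (∑ j, exp (u j)))`. The derivative of the log-sum-exp is the `p`-average
of the `Du j`, so `Dp i = p i (Du i - ∑ j, p j Du j)`. For `u i = -β ℂ(ε_i - ε)·(ε_i - ε)` one has
`Du i = 2β ℂ(ε_i - ε)`, and since the weights sum to one, centring these at their average replaces
`ε` by the barycenter `ε̄`.
-/

section Softmax

variable {ι : Type*} [Fintype ι]

/-- The Gibbs distribution on a finite type with log-weights `u` (the energy is `-u`, with the
inverse temperature absorbed). -/
noncomputable def softmax (u : ι → ℝ) (i : ι) : ℝ :=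
  Real.exp (u i) / ∑ j, Real.exp (u j)

theorem sum_exp_pos [Nonempty ι] (u : ι → ℝ) : 0 < ∑ j, Real.exp (u j) :=
  Finset.sum_pos (fun j _ => Real.exp_pos (u j)) Finset.univ_nonempty

theorem sum_softmax [Nonempty ι] (u : ι → ℝ) : ∑ i, softmax u i = 1 := by
  simp only [softmax, ← Finset.sum_div, div_self (sum_exp_pos u).ne']

theorem softmax_eq_exp_sub_log_sum_exp (u : ι → ℝ) (i : ι) :
    softmax u i = Real.exp (u i - Real.log (∑ j, Real.exp (u j))) := by
  have : Nonempty ι := ⟨i⟩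
  rw [Real.exp_sub, Real.exp_log (sum_exp_pos u), softmax]

variable {E : Type*} [NormedAddCommGroup E] [NormedSpace ℝ E]
  {u : ι → E → ℝ} {u' : ι → E →L[ℝ] ℝ} {x : E}

theorem hasFDerivAt_log_sum_exp [Nonempty ι] (hu : ∀ i, HasFDerivAt (u i) (u' i) x) :
    HasFDerivAt (fun y => Real.log (∑ j, Real.exp (u j y)))
      (∑ j, softmax (u · x) j • u' j) x := by
  have hsum := HasFDerivAt.fun_sum (u := Finset.univ) fun j _ => (hu j).exp
  refine (hsum.log (sum_exp_pos (u · x)).ne').congr_fderiv ?_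
  simp only [Finset.smul_sum, smul_smul, softmax, div_eq_inv_mul]

theorem hasFDerivAt_softmax (hu : ∀ i, HasFDerivAt (u i) (u' i) x) (i : ι) :
    HasFDerivAt (fun y => softmax (u · y) i)
      (softmax (u · x) i • (u' i - ∑ j, softmax (u · x) j • u' j)) x := by
  have : Nonempty ι := ⟨i⟩
  simp only [softmax_eq_exp_sub_log_sum_exp _ i]
  exact ((hu i).sub (hasFDerivAt_log_sum_exp hu)).exp

end Softmax

theorem sub_sum_smul_eq_of_sum_eq_one {ι R M : Type*} [Ring R] [AddCommGroup M] [Module R M]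
    {s : Finset ι} {w : ι → R} (hw : ∑ j ∈ s, w j = 1) (a x : M) (z : ι → M) :
    a - ∑ j ∈ s, w j • z j = (a - x) - ∑ j ∈ s, w j • (z j - x) := by
  simp only [smul_sub, Finset.sum_sub_distrib, ← Finset.sum_smul, hw, one_smul,
    sub_sub_sub_cancel_right]

section EffectiveLaw

variable {E : Type*} [NormedAddCommGroup E] [NormedSpace ℝ E] {B : E →L[ℝ] E →L[ℝ] ℝ}

theorem hasFDerivAt_bilin_sub_self (hB : ∀ x y, B x y = B y x) (a x : E) :
    HasFDerivAt (fun y => B (a - y) (a - y)) (-(2 : ℝ) • B (a - x)) x := by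
  have hsub : HasFDerivAt (fun y => a - y) (-ContinuousLinearMap.id ℝ E) x :=
    (hasFDerivAt_id x).const_sub a
  refine (B.hasFDerivAt_of_bilinear hsub hsub).congr_fderiv ?_
  ext h
  calc B (a - x) (-h) + B (-h) (a - x)
      = B (a - x) (-h) + B (a - x) (-h) := by rw [hB (-h)]
    _ = -2 * B (a - x) h := by rw [map_neg]; ring

variable {ι : Type*} [Fintype ι]

/-- The Gibbs weights `p*_i(ε)` of the data points `εs`, for a continuous bilinear form `B` on an
arbitrary normed space in place of `(x, y) ↦ ℂx·y`. -/
noncomputable def gibbsWeight (B : E →L[ℝ] E →L[ℝ] ℝ) (β : ℝ) (εs : ι → E) (ε : E) : ι → ℝ :=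
  softmax fun j => -β * B (εs j - ε) (εs j - ε)

theorem sum_gibbsWeight [Nonempty ι] (B : E →L[ℝ] E →L[ℝ] ℝ) (β : ℝ) (εs : ι → E) (ε : E) :
    ∑ i, gibbsWeight B β εs ε i = 1 :=
  sum_softmax _

theorem hasFDerivAt_gibbsWeight (hB : ∀ x y, B x y = B y x) (β : ℝ) (εs : ι → E) (ε : E) (i : ι) :
    HasFDerivAt (fun η => gibbsWeight B β εs η i)
      ((2 * β * gibbsWeight B β εs ε i) • B (εs i - ∑ j, gibbsWeight B β εs ε j • εs j)) ε := by
  have : Nonempty ι := ⟨i⟩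
  have hexponent (j : ι) : HasFDerivAt (fun η => -β * B (εs j - η) (εs j - η))
      ((2 * β) • B (εs j - ε)) ε :=
    ((hasFDerivAt_bilin_sub_self hB (εs j) ε).const_mul (-β)).congr_fderiv (by module)
  refine (hasFDerivAt_softmax hexponent i).congr_fderiv ?_
  let w := gibbsWeight B β εs ε
  calc w i • ((2 * β) • B (εs i - ε) - ∑ j, w j • (2 * β) • B (εs j - ε))
      = (2 * β * w i) • (B (εs i - ε) - ∑ j, w j • B (εs j - ε)) := by
        simp only [smul_comm _ (2 * β), ← Finset.smul_sum]
        module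
    _ = (2 * β * w i) • B (εs i - ∑ j, w j • εs j) := by
        rw [sub_sum_smul_eq_of_sum_eq_one (sum_gibbsWeight B β εs ε) (εs i) ε εs,
          map_sub B (εs i - ε), map_sum]
        simp only [map_smul, w]

theorem effective_law_tangent_general {F : Type*} [NormedAddCommGroup F] [NormedSpace ℝ F]
    (hB : ∀ x y, B x y = B y x) (β : ℝ) (εs : ι → E) (σs : ι → F)
    (p : E → ι → ℝ)
    (hp : ∀ ε i, p ε i = Real.exp (-β * B (εs i - ε) (εs i - ε)) /
      ∑ j, Real.exp (-β * B (εs j - ε) (εs j - ε)))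
    (σhat : E → F) (hσhat : ∀ ε, σhat ε = ∑ i, p ε i • σs i) (ε : E) :
    HasFDerivAt σhat
      (∑ j, ((2 * β * p ε j) • B (εs j - ∑ i, p ε i • εs i)).smulRight (σs j)) ε := by
  obtain rfl : p = gibbsWeight B β εs := funext₂ hp
  obtain rfl : σhat = fun ε => ∑ i, gibbsWeight B β εs ε i • σs i := funext hσhat
  exact HasFDerivAt.fun_sum fun j _ => (hasFDerivAt_gibbsWeight hB β εs ε j).smul_const (σs j)

end EffectiveLaw

section MatrixForm

variable {n : Type*} [Fintype n]

/-- The bilinear form `(x, y) ↦ ℂx·y` as a continuous bilinear map. -/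
noncomputable def mulVecDotProductCLM (C : Matrix n n ℝ) : (n → ℝ) →L[ℝ] (n → ℝ) →L[ℝ] ℝ :=
  ((dotProductBilin ℝ ℝ).comp C.mulVecLin).toContinuousBilinearMap

@[simp]
theorem mulVecDotProductCLM_apply (C : Matrix n n ℝ) (x y : n → ℝ) :
    mulVecDotProductCLM C x y = C *ᵥ x ⬝ᵥ y :=
  rfl

theorem mulVecDotProductCLM_comm {C : Matrix n n ℝ} (hC : C.IsSymm) (x y : n → ℝ) :
    mulVecDotProductCLM C x y = mulVecDotProductCLM C y x := by
  simp only [mulVecDotProductCLM_apply]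
  rw [dotProduct_comm, dotProduct_mulVec, ← mulVec_transpose, hC.eq]

end MatrixForm

/-- **Material tangent of the regularized effective law.** For Gibbs weights
`p*_i(ε) = e^{−β‖ε_i−ε‖_ℂ²}/Σ_j e^{−β‖ε_j−ε‖_ℂ²}` (with `‖x‖_ℂ² = ℂx·x`, `ℂ` symmetric
positive definite) and `σ̂(ε) = Σ_i p*_i(ε) σ_i`, the map `σ̂` is differentiable and
`Dσ̂(ε)[h] = 2β Σ_j p*_j(ε) (ℂ(ε_j − ε̄(ε))·h) σ_j`, where `ε̄(ε) = Σ_i p*_i(ε) ε_i`. -/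
theorem effective_law_tangent (d N : ℕ)
    (εs σs : Fin N → Fin d → ℝ)
    (C : Matrix (Fin d) (Fin d) ℝ) (hC : C.PosDef)
    (β : ℝ) (hβ : 0 < β)
    (p : (Fin d → ℝ) → Fin N → ℝ)
    (hp : ∀ ε i, p ε i =
      Real.exp (-β * (C.mulVec (εs i - ε) ⬝ᵥ (εs i - ε))) /
        ∑ j, Real.exp (-β * (C.mulVec (εs j - ε) ⬝ᵥ (εs j - ε))))
    (σhat : (Fin d → ℝ) → Fin d → ℝ)
    (hσhat : ∀ ε, σhat ε = ∑ i, p ε i • σs i) :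
    Differentiable ℝ σhat ∧
    ∀ (ε h : Fin d → ℝ),
      fderiv ℝ σhat ε h =
        ∑ j, (2 * β * p ε j * (C.mulVec (εs j - ∑ i, p ε i • εs i) ⬝ᵥ h)) • σs j := by
  have hσ := effective_law_tangent_general
    (mulVecDotProductCLM_comm (isHermitian_iff_isSymm.mp hC.isHermitian)) β εs σs p hp σhat hσhat
  exact ⟨fun ε => (hσ ε).differentiableAt, fun ε h => by simp [(hσ ε).fderiv, -map_sub]⟩
end
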